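/- arXiv:2310.17556 — 3 statements merged into one kernel-verified Lean document; each statement's English description precedes it below -/
import Mathlib

section
/- Let S be an n×m real matrix, λ > 0 a real number, and v an m-dimensional real vector. Suppose L is an invertible n×n real matrix with LLᵀ = SSᵀ + λĨ (e.g., the Cholesky factor of SSᵀ + λĨ), and set Q = L⁻¹S. Then the vector x = (1/λ)·(v − QᵀQ v) satisfies (SᵀS + λI)x = v, i.e., Algorithm 1 (Cholesky Solve of Damped Fisher) is correct. -/
open Matrix

/-- Correctness of Algorithm 1 (Cholesky Solve of Damped Fisher): if `L` is an
invertible `n × n` matrix with `L Lᵀ = S Sᵀ + lam Ĩ` and `Q = L⁻¹ S`, then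
`x = (1/lam) • (v - Qᵀ Q v)` solves `(Sᵀ S + lam I) x = v`. -/
theorem cholesky_solve_damped_fisher_correct (n m : ℕ)
    (S : Matrix (Fin n) (Fin m) ℝ) (lam : ℝ) (hlam : 0 < lam) (v : Fin m → ℝ)
    (L : Matrix (Fin n) (Fin n) ℝ) (hL : IsUnit L)
    (hLL : L * Lᵀ = S * Sᵀ + lam • (1 : Matrix (Fin n) (Fin n) ℝ))
    (Q : Matrix (Fin n) (Fin m) ℝ) (hQ : Q = L⁻¹ * S)
    (x : Fin m → ℝ)
    (hx : x = lam⁻¹ • (v - (Qᵀ * Q).mulVec v)) :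
    (Sᵀ * S + lam • (1 : Matrix (Fin m) (Fin m) ℝ)).mulVec x = v := by
  have hdet : IsUnit L.det := (Matrix.isUnit_iff_isUnit_det L).mp hL
  have hdetT : IsUnit Lᵀ.det := by rwa [Matrix.det_transpose]
  have h1 : (Sᵀ * S + lam • (1 : Matrix (Fin m) (Fin m) ℝ)) * Sᵀ = Sᵀ * (L * Lᵀ) := by
    rw [hLL, Matrix.add_mul, Matrix.mul_add, Matrix.mul_assoc]
    simp
  have hQT : Qᵀ = Sᵀ * (Lᵀ)⁻¹ := by
    rw [hQ, Matrix.transpose_mul, Matrix.transpose_nonsing_inv]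
  have h2 : (Sᵀ * S + lam • (1 : Matrix (Fin m) (Fin m) ℝ)) * (Qᵀ * Q) = Sᵀ * S := by
    rw [← Matrix.mul_assoc, hQT, ← Matrix.mul_assoc, h1, hQ, ← Matrix.mul_assoc Sᵀ L,
      Matrix.mul_nonsing_inv_cancel_right _ _ hdetT, Matrix.mul_assoc,
      Matrix.mul_nonsing_inv_cancel_left _ _ hdet]
  rw [hx, Matrix.mulVec_smul, Matrix.mulVec_sub, Matrix.mulVec_mulVec, h2, Matrix.add_mulVec,
    add_sub_cancel_left, Matrix.smul_mulVec, Matrix.one_mulVec, smul_smul,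
    inv_mul_cancel₀ hlam.ne', one_smul]
end

section
/- Let S be an n×m real matrix, λ > 0 a real number, and v an m-dimensional real vector. Suppose L is an invertible n×n real matrix with LLᵀ = SSᵀ + λĨ, and set Q = L⁻¹S. If x* satisfies (SᵀS + λI)x* = v, then SᵀS x* = QᵀQ v. -/
open Matrix

/-- Key intermediate identity in the proof of correctness of Algorithm 1:
if `L Lᵀ = S Sᵀ + lam Ĩ` with `L` invertible, `Q = L⁻¹ S`, and
`(Sᵀ S + lam I) x* = v`, then `Sᵀ S x* = Qᵀ Q v`. -/
theorem cholesky_solve_key_identity (n m : ℕ)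
    (S : Matrix (Fin n) (Fin m) ℝ) (lam : ℝ) (hlam : 0 < lam) (v : Fin m → ℝ)
    (L : Matrix (Fin n) (Fin n) ℝ) (hL : IsUnit L)
    (hLL : L * Lᵀ = S * Sᵀ + lam • (1 : Matrix (Fin n) (Fin n) ℝ))
    (Q : Matrix (Fin n) (Fin m) ℝ) (hQ : Q = L⁻¹ * S)
    (xs : Fin m → ℝ)
    (hxs : (Sᵀ * S + lam • (1 : Matrix (Fin m) (Fin m) ℝ)).mulVec xs = v) :
    (Sᵀ * S).mulVec xs = (Qᵀ * Q).mulVec v := by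
  have hdet : IsUnit L.det := (Matrix.isUnit_iff_isUnit_det L).mp hL
  have hdetT : IsUnit (Lᵀ).det := by rwa [Matrix.det_transpose]
  have h1 : S * (Sᵀ * S + lam • (1 : Matrix (Fin m) (Fin m) ℝ)) = L * (Lᵀ * S) := by
    rw [← Matrix.mul_assoc, hLL, Matrix.mul_add, Matrix.add_mul, Matrix.mul_assoc]
    simp
  have h2 : Qᵀ * Q * (Sᵀ * S + lam • (1 : Matrix (Fin m) (Fin m) ℝ)) = Sᵀ * S := by
    rw [hQ, Matrix.mul_assoc, Matrix.mul_assoc L⁻¹, h1,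
      Matrix.nonsing_inv_mul_cancel_left _ _ hdet, Matrix.transpose_mul,
      Matrix.transpose_nonsing_inv, Matrix.mul_assoc,
      Matrix.nonsing_inv_mul_cancel_left _ _ hdetT]
  rw [← hxs, Matrix.mulVec_mulVec, h2]
end

section
/- Let S be an n×m complex matrix, λ > 0 a real number, and v an m-dimensional real vector. Let S̃ be the 2n×m real matrix obtained by concatenating the real part of S and the imaginary part of S along the row dimension. Then the vector x = (1/λ)·(v − S̃ᵀ(S̃S̃ᵀ + λĨ₂ₙ)⁻¹S̃ v) satisfies (Re(S†S) + λI)x = v. -/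
open Matrix

/-- The paper's algorithm applied to the real-part version of stochastic
reconfiguration: with `S̃ = Concat[Re S, Im S]`, the vector
`x = (1/lam) • (v - S̃ᵀ (S̃ S̃ᵀ + lam Ĩ₂ₙ)⁻¹ S̃ v)` solves `(Re(S† S) + lam I) x = v`. -/
theorem real_part_sr_solve (n m : ℕ)
    (S : Matrix (Fin n) (Fin m) ℂ) (lam : ℝ) (hlam : 0 < lam) (v : Fin m → ℝ)
    (St : Matrix (Fin n ⊕ Fin n) (Fin m) ℝ)
    (hSt : St = Matrix.fromRows (S.map Complex.re) (S.map Complex.im))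
    (x : Fin m → ℝ)
    (hx : x = lam⁻¹ •
      (v - Stᵀ.mulVec
        ((St * Stᵀ + lam • (1 : Matrix (Fin n ⊕ Fin n) (Fin n ⊕ Fin n) ℝ))⁻¹.mulVec
          (St.mulVec v)))) :
    ((Sᴴ * S).map Complex.re + lam • (1 : Matrix (Fin m) (Fin m) ℝ)).mulVec x = v := by
  have hre : (Sᴴ * S).map Complex.re = Stᵀ * St := by
    subst hSt
    ext i j
    simp [Matrix.mul_apply, Fintype.sum_sum_type, ← Finset.sum_add_distrib]
  have hA : (St * Stᵀ + lam • (1 : Matrix (Fin n ⊕ Fin n) (Fin n ⊕ Fin n) ℝ)).PosDef := by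
    have h1 : (St * Stᵀ).PosSemidef := by
      simpa using Matrix.posSemidef_self_mul_conjTranspose St
    exact Matrix.PosDef.posSemidef_add h1 (Matrix.PosDef.one.smul hlam)
  have hdet : IsUnit (St * Stᵀ + lam • (1 : Matrix (Fin n ⊕ Fin n) (Fin n ⊕ Fin n) ℝ)).det :=
    hA.det_pos.ne'.isUnit
  obtain ⟨w, hw⟩ : ∃ w, w =
      (St * Stᵀ + lam • (1 : Matrix (Fin n ⊕ Fin n) (Fin n ⊕ Fin n) ℝ))⁻¹.mulVec
        (St.mulVec v) := ⟨_, rfl⟩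
  rw [← hw] at hx
  have hAw : St *ᵥ (Stᵀ *ᵥ w) + lam • w = St *ᵥ v := by
    have h2 : (St * Stᵀ + lam • (1 : Matrix (Fin n ⊕ Fin n) (Fin n ⊕ Fin n) ℝ)) *ᵥ w
        = St *ᵥ v := by
      rw [hw, Matrix.mulVec_mulVec, Matrix.mul_nonsing_inv _ hdet, Matrix.one_mulVec]
    simpa [Matrix.add_mulVec, Matrix.smul_mulVec, ← Matrix.mulVec_mulVec] using h2
  have key : Stᵀ *ᵥ (St *ᵥ (v - Stᵀ *ᵥ w)) + lam • (v - Stᵀ *ᵥ w) = lam • v := by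
    have h3 : St *ᵥ (v - Stᵀ *ᵥ w) = lam • w := by
      rw [Matrix.mulVec_sub, ← hAw]
      abel
    rw [h3, Matrix.mulVec_smul, smul_sub]
    abel
  rw [hre, hx, Matrix.mulVec_smul, Matrix.add_mulVec, Matrix.smul_mulVec, Matrix.one_mulVec,
    ← Matrix.mulVec_mulVec, key, smul_smul, inv_mul_cancel₀ hlam.ne', one_smul]
end
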